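/- Let n ≥ 1, let Υ, Υ̃, W, W̃ ∈ M_n(ℝ) with trace(W) = trace(W̃) = 0, and let ε, ε̃ ∈ ℝ. Set K₀ := W, K_{l+1} := [Υ, K_l] for l ∈ ℕ. Then ε·E + exp(tΥ)·W·exp(−tΥ) = ε̃·E + exp(tΥ̃)·W̃·exp(−tΥ̃) holds for all t ∈ ℝ if and only if ε = ε̃, W = W̃, and [Υ − Υ̃, K_l] = 0 for all l ∈ ℕ. (In the paper: the tuples (ε, W, Υ) and (ε̃, W̃, Υ̃) are associated with the same matrix-valued function V(t) = εE + e^{tΥ}We^{−tΥ} exactly when ε = ε̃, W = W̃ and Υ − Υ̃ lies in the centralizer 𝔰 of {K_l}.) -/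

import Mathlib

open NormedSpace

section aux

variable {𝔸 : Type*} [NormedRing 𝔸] [NormedAlgebra ℝ 𝔸] [CompleteSpace 𝔸]

theorem aux_hasDerivAt_conj (A X : 𝔸) (t : ℝ) :
    HasDerivAt (fun t : ℝ => exp (t • A) * X * exp (-(t • A)))
      (exp (t • A) * (A * X - X * A) * exp (-(t • A))) t := by
  have h1 : HasDerivAt (fun t : ℝ => exp (t • A)) (exp (t • A) * A) t :=
    hasDerivAt_exp_smul_const A t
  have h2 : HasDerivAt (fun t : ℝ => exp (-(t • A))) (-A * exp (-(t • A))) t := by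
    have := hasDerivAt_exp_smul_const' (𝕂 := ℝ) (-A) t
    simpa only [smul_neg] using this
  refine ((h1.mul_const X).mul h2).congr_deriv ?_
  noncomm_ring

/-- The commutator as a continuous linear map. -/
noncomputable def auxAd (A : 𝔸) : 𝔸 →L[ℝ] 𝔸 :=
  ContinuousLinearMap.mul ℝ 𝔸 A - (ContinuousLinearMap.mul ℝ 𝔸).flip A

theorem auxAd_apply (A X : 𝔸) : auxAd A X = A * X - X * A := by
  simp [auxAd]

theorem aux_exp_cancel (B : 𝔸) : exp B * exp (-B) = 1 := by
  let _ : NormedAlgebra ℚ 𝔸 := NormedAlgebra.restrictScalars ℚ ℝ 𝔸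
  rw [← exp_add_of_commute ((Commute.refl B).neg_right)]
  simp

theorem aux_exp_ad (A X : 𝔸) (t : ℝ) :
    exp (t • A) * X * exp (-(t • A)) = exp (t • auxAd A) X := by
  have hd : ∀ s : ℝ, HasDerivAt
      (fun s : ℝ => exp (-(s • A)) * (exp (s • auxAd A) X) * exp (s • A)) 0 s := by
    intro s
    have h1 : HasDerivAt (fun t : ℝ => exp (t • A)) (A * exp (s • A)) s :=
      hasDerivAt_exp_smul_const' A s
    have h2 : HasDerivAt (fun t : ℝ => exp (-(t • A))) (exp (-(s • A)) * (-A)) s := by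
      have := hasDerivAt_exp_smul_const (𝕂 := ℝ) (-A) s
      simpa only [smul_neg] using this
    have h3 : HasDerivAt (fun t : ℝ => exp (t • auxAd A) X)
        (A * exp (s • auxAd A) X - exp (s • auxAd A) X * A) s := by
      have := (hasDerivAt_exp_smul_const' (𝕂 := ℝ) (auxAd A) s).clm_apply (hasDerivAt_const s X)
      simpa [auxAd_apply] using this
    refine ((h2.mul h3).mul h1).congr_deriv ?_
    simp only [Pi.mul_apply]
    noncomm_ring
  have hc := is_const_of_deriv_eq_zero (fun s => (hd s).differentiableAt)
    (fun s => (hd s).deriv) t 0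
  simp only [zero_smul, neg_zero, exp_zero, one_mul, mul_one] at hc
  have hz : exp ((0 : ℝ) • auxAd A) X = X := by
    have h0 : (0 : ℝ) • auxAd A = 0 := by
      ext x
      simp only [ContinuousLinearMap.smul_apply, zero_smul, ContinuousLinearMap.zero_apply]
    rw [h0, exp_zero]
    rfl
  rw [hz] at hc
  have e1 := aux_exp_cancel (t • A)
  calc exp (t • A) * X * exp (-(t • A))
      = exp (t • A) * (exp (-(t • A)) * (exp (t • auxAd A) X) * exp (t • A))
          * exp (-(t • A)) := by rw [hc]
    _ = (exp (t • A) * exp (-(t • A))) * (exp (t • auxAd A) X) *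
          (exp (t • A) * exp (-(t • A))) := by noncomm_ring
    _ = _ := by rw [e1]; simp

theorem aux_exp_apply_congr (L M : 𝔸 →L[ℝ] 𝔸) (X : 𝔸) (h : ∀ l : ℕ, (L ^ l) X = (M ^ l) X)
    (t : ℝ) : exp (t • L) X = exp (t • M) X := by
  have key : ∀ N : 𝔸 →L[ℝ] 𝔸,
      HasSum (fun l : ℕ => ((l.factorial : ℝ)⁻¹ • (t • N) ^ l) X) (exp (t • N) X) := by
    intro N
    have h1 : HasSum (fun l : ℕ => (l.factorial : ℝ)⁻¹ • (t • N) ^ l) (exp (t • N)) :=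
      exp_series_hasSum_exp' (𝕂 := ℝ) (t • N)
    have h2 := h1.mapL (ContinuousLinearMap.apply ℝ 𝔸 X)
    simpa only [ContinuousLinearMap.apply_apply] using h2
  refine (key L).unique ?_
  convert key M using 2 with l
  have hp : ∀ (N : 𝔸 →L[ℝ] 𝔸) (l : ℕ), ((t • N) ^ l) X = t ^ l • (N ^ l) X := by
    intro N l
    induction l with
    | zero => simp
    | succ l ih =>
      rw [pow_succ', mul_apply_eq_comp, ih, pow_succ' N, mul_apply_eq_comp,
        ContinuousLinearMap.smul_apply, map_smul, smul_smul, pow_succ' t]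
  rw [ContinuousLinearMap.smul_apply, ContinuousLinearMap.smul_apply, hp, hp, h]

theorem aux_main (A B W : 𝔸) (K : ℕ → 𝔸) (hK0 : K 0 = W)
    (hK : ∀ l, K (l + 1) = A * K l - K l * A) :
    (∀ t : ℝ, exp (t • A) * W * exp (-(t • A)) = exp (t • B) * W * exp (-(t • B))) ↔
      ∀ l : ℕ, (A - B) * K l - K l * (A - B) = 0 := by
  have hcomm : ∀ l, (A - B) * K l - K l * (A - B) =
      (A * K l - K l * A) - (B * K l - K l * B) := fun l => by noncomm_ring
  constructor
  · intro h
    have step : ∀ l, (∀ t : ℝ, exp (t • A) * K l * exp (-(t • A)) =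
        exp (t • B) * K l * exp (-(t • B))) →
        ∀ t : ℝ, exp (t • A) * (A * K l - K l * A) * exp (-(t • A)) =
        exp (t • B) * (B * K l - K l * B) * exp (-(t • B)) := by
      intro l hl t
      have h1 := aux_hasDerivAt_conj A (K l) t
      rw [funext hl] at h1
      exact h1.unique (aux_hasDerivAt_conj B (K l) t)
    have step0 : ∀ l, (∀ t : ℝ, exp (t • A) * K l * exp (-(t • A)) =
        exp (t • B) * K l * exp (-(t • B))) → A * K l - K l * A = B * K l - K l * B := by
      intro l hl
      simpa using step l hl 0
    have all : ∀ l, ∀ t : ℝ, exp (t • A) * K l * exp (-(t • A)) =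
        exp (t • B) * K l * exp (-(t • B)) := by
      intro l
      induction l with
      | zero => rw [hK0]; exact h
      | succ l ih =>
        intro t
        have := step l ih t
        rw [← step0 l ih] at this
        rw [hK]
        exact this
    intro l
    rw [hcomm, step0 l (all l), sub_self]
  · intro h t
    rw [aux_exp_ad, aux_exp_ad]
    apply aux_exp_apply_congr
    have hA : ∀ l, (auxAd A ^ l) W = K l := by
      intro l
      induction l with
      | zero => simp [hK0]
      | succ l ih => rw [pow_succ', mul_apply_eq_comp, ih, auxAd_apply, hK]
    have hB : ∀ l, (auxAd B ^ l) W = K l := by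
      intro l
      induction l with
      | zero => simp [hK0]
      | succ l ih =>
        rw [pow_succ', mul_apply_eq_comp, ih, auxAd_apply, hK]
        have := h l
        rw [hcomm] at this
        exact (sub_eq_zero.mp this).symm
    intro l
    rw [hA, hB]

end aux

section auxMatrix

attribute [local instance] Matrix.linftyOpNormedRing Matrix.linftyOpNormedAlgebra

theorem aux_matrix (n : ℕ) (A B W : Matrix (Fin n) (Fin n) ℝ)
    (K : ℕ → Matrix (Fin n) (Fin n) ℝ) (hK0 : K 0 = W)
    (hK : ∀ l, K (l + 1) = A * K l - K l * A) :
    (∀ t : ℝ, exp (t • A) * W * exp (-(t • A)) = exp (t • B) * W * exp (-(t • B))) ↔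
      ∀ l : ℕ, (A - B) * K l - K l * (A - B) = 0 :=
  aux_main A B W K hK0 hK

end auxMatrix


/-- The tuples `(ε, W, Υ)` and `(ε̃, W̃, Υ̃)`, with `W, W̃` traceless, are associated with
the same matrix-valued function `V(t) = ε·E + e^{tΥ} W e^{−tΥ}` if and only if `ε = ε̃`,
`W = W̃` and `Υ − Υ̃` centralizes all the matrices `K_l`, where `K₀ = W` and
`K_{l+1} = [Υ, K_l]`. -/
theorem same_V_iff_centralizer_difference (n : ℕ) (hn : 1 ≤ n)
    (Υ Υt W Wt : Matrix (Fin n) (Fin n) ℝ)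
    (hW : W.trace = 0) (hWt : Wt.trace = 0)
    (ε εt : ℝ)
    (K : ℕ → Matrix (Fin n) (Fin n) ℝ)
    (hK0 : K 0 = W) (hKrec : ∀ l, K (l + 1) = Υ * K l - K l * Υ) :
    (∀ t : ℝ,
        ε • (1 : Matrix (Fin n) (Fin n) ℝ) + exp (t • Υ) * W * exp (-(t • Υ)) =
          εt • (1 : Matrix (Fin n) (Fin n) ℝ) + exp (t • Υt) * Wt * exp (-(t • Υt))) ↔
      (ε = εt ∧ W = Wt ∧ ∀ l : ℕ, (Υ - Υt) * K l - K l * (Υ - Υt) = 0) := by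
  have hm := aux_matrix n Υ Υt W K hK0 hKrec
  constructor
  · intro h
    have h0 := h 0
    simp only [zero_smul, neg_zero, exp_zero, one_mul, mul_one] at h0
    have htr := congrArg Matrix.trace h0
    simp only [Matrix.trace_add, Matrix.trace_smul, Matrix.trace_one, hW, hWt, add_zero,
      Fintype.card_fin, smul_eq_mul] at htr
    have hn' : (n : ℝ) ≠ 0 := by
      have : n ≠ 0 := by omega
      exact_mod_cast this
    have he : ε = εt := mul_right_cancel₀ hn' htr
    subst he
    have hw : W = Wt := add_left_cancel h0
    subst hw
    exact ⟨rfl, rfl, hm.mp fun t => add_left_cancel (h t)⟩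
  · rintro ⟨rfl, rfl, h⟩ t
    rw [hm.mpr h t]
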